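/- Let I ⊆ k[x_1,…,x_n] be an ideal and ≺ a term order, and orient the graph of the Gröbner fan of I by ≺. Let (C_1, C_2) be a directed edge, let M_1 and M_2 be the monomial initial ideals of I corresponding to C_1 and C_2 respectively, and let v be a point in the relative interior of the shared facet of C_1 and C_2. Then in_≺(in_v(I)) = M_2. -/

import Mathlib

/-!
Let `σ` be the weight order of a positive vector `ω` in the class defining `C₂`, with ties broken
by `τ`, and let `E` be the set of `σ`-leading exponents of `I`. Both sides of the equation are
shown to be the ideal spanned by the monomials with exponent in `E`.

For each `m ∈ E` let `g m ∈ I` be `x^m` minus its `σ`-normal form, so that `m` is the only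
exponent of `g m` in `E`. These polynomials are a `k`-basis of `I`, and
`f = ∑ f_m g_m` (sum over the exponents of `f` in `E`) for every `f ∈ I`. This expansion, used
through `IsReducedFamily.exists_of_mem_support`, takes the place of the division algorithm and
requires no positivity of the weight vectors `v` and `w₂`, which may have negative entries.

* Every `u ∈ C₂` satisfies `⟨u, β⟩ ≤ ⟨u, m⟩` for all exponents `β` of `g m`
  (`wdeg_le_of_mem_Cv`). In the interior of `C₂` the inequality is strict for `β ≠ m`, which gives
  `in_{w₂}(I) = ⟨x^m : m ∈ E⟩` (`initialFormIdeal_eq_span`).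
* Let `β ≠ m` be an exponent of `in_v(g m)`. The functional `⟨·, m - β⟩` is nonnegative on the
  facet and zero at the relative interior point `v`, so it vanishes on the facet. Hence `m - β` is
  a multiple of `q - p`, a positive one since both are positive on `w₂`, and `p ≺ q` forces
  `β ≺ m` (`lt_of_sub_eq_mul`). So `x^m` is the `≺`-initial term of `in_v(g m)`.
* Therefore `in_≺(in_v(I))` contains all `x^m` with `m ∈ E`. It contains no other monomial:
  otherwise subtracting from such a monomial its `≺`-normal form gives a nonzero element of
  `in_v(I)` without exponents in `E`, contradicting the expansion above
  (`leadSet_initialFormIdeal_eq`).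
-/

open MvPolynomial

/-- A term order on the monomials of `k[x_1,…,x_n]`, identified with exponent
vectors in `ℕ^n`: a strict total order with `1` smallest and compatible with
multiplication of monomials. -/
structure TermOrder (n : ℕ) : Type where
  lt : (Fin n →₀ ℕ) → (Fin n →₀ ℕ) → Prop
  irrefl : ∀ a, ¬ lt a a
  trans : ∀ a b c, lt a b → lt b c → lt a c
  total : ∀ a b, a ≠ b → lt a b ∨ lt b a
  zero_lt : ∀ a, a ≠ 0 → lt 0 a
  add_right : ∀ a b c, lt a b → lt (a + c) (b + c)

variable {n : ℕ} {k : Type*} [Field k]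

/-- The exponent of the `τ`-largest term of `f` (and `0` if `f = 0`). -/
noncomputable def TermOrder.leadExp (τ : TermOrder n) (f : MvPolynomial (Fin n) k) :
    Fin n →₀ ℕ :=
  letI := Classical.propDecidable (∃ α, α ∈ f.support ∧ ∀ β ∈ f.support, β ≠ α → τ.lt β α)
  if h : ∃ α, α ∈ f.support ∧ ∀ β ∈ f.support, β ≠ α → τ.lt β α then h.choose else 0

/-- The initial term `in_τ(f)` : the `τ`-largest term of `f` (with coefficient). -/
noncomputable def TermOrder.initialTerm (τ : TermOrder n) (f : MvPolynomial (Fin n) k) :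
    MvPolynomial (Fin n) k :=
  monomial (τ.leadExp f) (f.coeff (τ.leadExp f))

/-- The initial ideal `in_τ(I) = ⟨in_τ(f) : f ∈ I \ {0}⟩`. -/
noncomputable def TermOrder.initialIdeal (τ : TermOrder n) (I : Ideal (MvPolynomial (Fin n) k)) :
    Ideal (MvPolynomial (Fin n) k) :=
  Ideal.span {p | ∃ f ∈ I, f ≠ 0 ∧ p = τ.initialTerm f}

/-- The `ω`-degree `⟨ω,α⟩` of a monomial exponent `α`. -/
noncomputable def wdeg (ω : Fin n → ℝ) (α : Fin n →₀ ℕ) : ℝ := ∑ i, ω i * (α i : ℝ)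

/-- The initial form `in_ω(f)`: the sum of the terms of `f` whose exponents
maximize `⟨ω,·⟩`. -/
noncomputable def initialForm (ω : Fin n → ℝ) (f : MvPolynomial (Fin n) k) :
    MvPolynomial (Fin n) k :=
  letI : DecidablePred fun α : Fin n →₀ ℕ => ∀ β ∈ f.support, wdeg ω β ≤ wdeg ω α :=
    Classical.decPred _
  ∑ α ∈ f.support.filter (fun α => ∀ β ∈ f.support, wdeg ω β ≤ wdeg ω α),
    monomial α (f.coeff α)

/-- The initial ideal `in_ω(I) = ⟨in_ω(f) : f ∈ I⟩`. -/
noncomputable def initialFormIdeal (ω : Fin n → ℝ) (I : Ideal (MvPolynomial (Fin n) k)) :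
    Ideal (MvPolynomial (Fin n) k) :=
  Ideal.span {p | ∃ f ∈ I, p = initialForm ω f}

/-- `C_≺(I)`: the closure of `{u : in_u(I) = in_≺(I)}` in `ℝ^n`. -/
noncomputable def Cprec (τ : TermOrder n) (I : Ideal (MvPolynomial (Fin n) k)) :
    Set (Fin n → ℝ) :=
  closure {u : Fin n → ℝ | initialFormIdeal u I = τ.initialIdeal I}

/-- `C_v(I)`: the closure of the equivalence class `{u : in_u(I) = in_v(I)}`. -/
noncomputable def Cv (I : Ideal (MvPolynomial (Fin n) k)) (v : Fin n → ℝ) :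
    Set (Fin n → ℝ) :=
  closure {u : Fin n → ℝ | initialFormIdeal u I = initialFormIdeal v I}

/-- `F` is a face of `C`: either empty or the set of maximizers over `C` of a
linear functional. -/
def IsFaceOf (C F : Set (Fin n → ℝ)) : Prop :=
  F = ∅ ∨ ∃ w : Fin n → ℝ, F = {x ∈ C | ∀ y ∈ C, ∑ i, w i * y i ≤ ∑ i, w i * x i}

/-- The Gröbner fan of `I`: all nonempty faces of the cones `C_v(I)`, `v ∈ ℝ^n_{>0}`. -/
noncomputable def GroebnerFan (I : Ideal (MvPolynomial (Fin n) k)) :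
    Set (Set (Fin n → ℝ)) :=
  {F | F.Nonempty ∧ ∃ v : Fin n → ℝ, (∀ i, 0 < v i) ∧ IsFaceOf (Cv I v) F}

/-- `G` is a (finite) Gröbner basis of `I` w.r.t. `τ`. -/
def IsGroebnerBasis (τ : TermOrder n) (I : Ideal (MvPolynomial (Fin n) k))
    (G : Set (MvPolynomial (Fin n) k)) : Prop :=
  G.Finite ∧ Ideal.span G = I ∧ τ.initialIdeal I = Ideal.span (τ.initialTerm '' G)

/-- `G` is the reduced Gröbner basis of `I` w.r.t. `τ`. -/
def IsReducedGroebnerBasis (τ : TermOrder n) (I : Ideal (MvPolynomial (Fin n) k))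
    (G : Set (MvPolynomial (Fin n) k)) : Prop :=
  IsGroebnerBasis τ I G ∧
  (∀ g ∈ G, g.coeff (τ.leadExp g) = 1) ∧
  (∀ g ∈ G, ∀ α ∈ g.support, α ≠ τ.leadExp g →
    (monomial α 1 : MvPolynomial (Fin n) k) ∉ τ.initialIdeal I) ∧
  (∀ g ∈ G, Ideal.span (τ.initialTerm '' (G \ {g})) ≠ τ.initialIdeal I)

/-! ### Term orders and leading exponents -/

/-- The defining property of the leading exponent of `f`. -/
def TermOrder.IsLead (τ : TermOrder n) (f : MvPolynomial (Fin n) k) (α : Fin n →₀ ℕ) : Prop :=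
  α ∈ f.support ∧ ∀ β ∈ f.support, β ≠ α → τ.lt β α

theorem TermOrder.asymm (τ : TermOrder n) {a b : Fin n →₀ ℕ} (h : τ.lt a b) : ¬ τ.lt b a :=
  fun h' => τ.irrefl a (τ.trans a b a h h')

theorem TermOrder.exists_isLead (τ : TermOrder n) (f : MvPolynomial (Fin n) k) (hf : f ≠ 0) :
    ∃ α, τ.IsLead f α := by
  have key : ∀ s : Finset (Fin n →₀ ℕ), s.Nonempty →
      ∃ α, α ∈ s ∧ ∀ β ∈ s, β ≠ α → τ.lt β α := by
    intro s hs
    induction hs using Finset.Nonempty.cons_induction with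
    | singleton a => exact ⟨a, by simp⟩
    | cons a s ha hs ih =>
      obtain ⟨b, hb, hmax⟩ := ih
      have hab : a ≠ b := fun h => ha (h ▸ hb)
      rcases τ.total a b hab with h | h
      · refine ⟨b, by simp [hb], fun β hβ hne => ?_⟩
        rcases Finset.mem_cons.1 hβ with rfl | hβ
        · exact h
        · exact hmax β hβ hne
      · refine ⟨a, by simp, fun β hβ hne => ?_⟩
        rcases Finset.mem_cons.1 hβ with rfl | hβ
        · exact absurd rfl hne
        · by_cases hβb : β = b
          · exact hβb ▸ h
          · exact τ.trans _ _ _ (hmax β hβ hβb) h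
  exact key f.support (Finset.nonempty_iff_ne_empty.2 fun h => hf (by simpa using h))

theorem TermOrder.IsLead.eq {τ : TermOrder n} {f : MvPolynomial (Fin n) k} {α β : Fin n →₀ ℕ}
    (hα : τ.IsLead f α) (hβ : τ.IsLead f β) : α = β := by
  by_contra h
  exact τ.asymm (hβ.2 α hα.1 h) (hα.2 β hβ.1 (Ne.symm h))

theorem TermOrder.IsLead.leadExp_eq {τ : TermOrder n} {f : MvPolynomial (Fin n) k}
    {α : Fin n →₀ ℕ} (hα : τ.IsLead f α) : τ.leadExp f = α := by
  have h : ∃ α, α ∈ f.support ∧ ∀ β ∈ f.support, β ≠ α → τ.lt β α := ⟨α, hα⟩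
  have h' : τ.IsLead f (τ.leadExp f) := by
    unfold TermOrder.leadExp
    rw [dif_pos h]
    exact h.choose_spec
  exact h'.eq hα

theorem TermOrder.lt_of_le_of_ne (τ : TermOrder n) {a b : Fin n →₀ ℕ} (h : a ≤ b)
    (hne : a ≠ b) : τ.lt a b := by
  have hc : b - a ≠ 0 := fun h0 => hne (le_antisymm h (tsub_eq_zero_iff_le.1 h0))
  have := τ.add_right 0 (b - a) a (τ.zero_lt _ hc)
  rwa [zero_add, tsub_add_cancel_of_le h] at this

/-- Dickson's lemma: a term order is a well-order. -/
theorem TermOrder.wf (τ : TermOrder n) : WellFounded τ.lt := by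
  rw [wellFounded_iff_isEmpty_descending_chain]
  refine ⟨fun ⟨f, hf⟩ => ?_⟩
  have hlt : ∀ i j, i < j → τ.lt (f j) (f i) := by
    intro i j hij
    induction hij with
    | refl => exact hf i
    | step _ ih => exact τ.trans _ _ _ (hf _) ih
  obtain ⟨i, j, hij, hle⟩ := wellQuasiOrdered_le f
  have h := hlt i j hij
  by_cases he : f i = f j
  · rw [he] at h
    exact τ.irrefl _ h
  · exact τ.asymm h (τ.lt_of_le_of_ne hle he)

theorem TermOrder.add_lt_add (τ : TermOrder n) {a b c d : Fin n →₀ ℕ} (h : τ.lt a b)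
    (h' : τ.lt c d) : τ.lt (a + c) (b + d) := by
  refine τ.trans _ _ _ (τ.add_right a b c h) ?_
  rw [add_comm b c, add_comm b d]
  exact τ.add_right c d b h'

theorem TermOrder.nsmul_lt (τ : TermOrder n) {a b : Fin n →₀ ℕ} (h : τ.lt a b) (N : ℕ) :
    τ.lt ((N + 1) • a) ((N + 1) • b) := by
  induction N with
  | zero => simpa using h
  | succ N ih =>
    rw [succ_nsmul a, succ_nsmul b]
    exact τ.add_lt_add ih h

theorem wdeg_zero (ω : Fin n → ℝ) : wdeg ω 0 = 0 := by simp [wdeg]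

theorem wdeg_add (ω : Fin n → ℝ) (α β : Fin n →₀ ℕ) : wdeg ω (α + β) = wdeg ω α + wdeg ω β := by
  simp [wdeg, mul_add, Finset.sum_add_distrib]

/-- The weight order of a nonnegative weight `ω` with ties broken by `τ`. -/
def TermOrder.refine (τ : TermOrder n) (ω : Fin n → ℝ) (hω : ∀ i, 0 ≤ ω i) : TermOrder n where
  lt a b := wdeg ω a < wdeg ω b ∨ (wdeg ω a = wdeg ω b ∧ τ.lt a b)
  irrefl a h := by
    rcases h with h | h
    · exact lt_irrefl _ h
    · exact τ.irrefl a h.2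
  trans a b c h h' := by
    rcases h with h | ⟨h, g⟩ <;> rcases h' with h' | ⟨h', g'⟩
    · exact Or.inl (h.trans h')
    · exact Or.inl (h'.symm ▸ h)
    · exact Or.inl (h ▸ h')
    · exact Or.inr ⟨h.trans h', τ.trans _ _ _ g g'⟩
  total a b hab := by
    rcases lt_trichotomy (wdeg ω a) (wdeg ω b) with h | h | h
    · exact Or.inl (Or.inl h)
    · exact (τ.total a b hab).imp (fun g => Or.inr ⟨h, g⟩) (fun g => Or.inr ⟨h.symm, g⟩)
    · exact Or.inr (Or.inl h)
  zero_lt a ha := by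
    have h0 : 0 ≤ wdeg ω a := Finset.sum_nonneg fun i _ => mul_nonneg (hω i) (Nat.cast_nonneg _)
    rw [wdeg_zero]
    exact h0.lt_or_eq.imp id fun h => ⟨h, τ.zero_lt a ha⟩
  add_right a b c h := by
    rw [wdeg_add, wdeg_add]
    exact h.imp (fun h => by linarith) fun h => ⟨by rw [h.1], τ.add_right _ _ _ h.2⟩

/-! ### Normal forms -/

/-- The exponents of the leading monomials of the nonzero elements of `I`. -/
def TermOrder.leadSet (τ : TermOrder n) (I : Ideal (MvPolynomial (Fin n) k)) :
    Set (Fin n →₀ ℕ) :=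
  {α | ∃ f ∈ I, τ.IsLead f α}

theorem TermOrder.initialIdeal_eq_span (τ : TermOrder n) (I : Ideal (MvPolynomial (Fin n) k)) :
    τ.initialIdeal I = Ideal.span ((fun α => monomial α (1 : k)) '' τ.leadSet I) := by
  apply le_antisymm
  · refine Ideal.span_le.2 ?_
    rintro _ ⟨f, hf, hf0, rfl⟩
    obtain ⟨α, hα⟩ := τ.exists_isLead f hf0
    have h : τ.initialTerm f = C (f.coeff α) * monomial α (1 : k) := by
      rw [TermOrder.initialTerm, hα.leadExp_eq, C_mul_monomial, mul_one]
    rw [h]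
    exact Ideal.mul_mem_left _ _ (Ideal.subset_span ⟨α, ⟨f, hf, hα⟩, rfl⟩)
  · refine Ideal.span_le.2 ?_
    rintro _ ⟨α, ⟨f, hf, hα⟩, rfl⟩
    have hc : f.coeff α ≠ 0 := mem_support_iff.1 hα.1
    have h : monomial α (1 : k) = C (f.coeff α)⁻¹ * τ.initialTerm f := by
      rw [TermOrder.initialTerm, hα.leadExp_eq, C_mul_monomial, inv_mul_cancel₀ hc]
    simp only [SetLike.mem_coe]
    rw [h]
    refine Ideal.mul_mem_left _ _ (Ideal.subset_span ⟨f, hf, ?_, rfl⟩)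
    rintro rfl
    simp at hc

/-- Macaulay's basis theorem, existence part: every monomial is congruent modulo `I` to a
combination of standard monomials, those with exponent outside the set of leading exponents. -/
theorem TermOrder.exists_normalForm (τ : TermOrder n) (I : Ideal (MvPolynomial (Fin n) k))
    (m : Fin n →₀ ℕ) :
    ∃ r : MvPolynomial (Fin n) k, monomial m 1 - r ∈ I ∧ ∀ α ∈ r.support, α ∉ τ.leadSet I := by
  set V : Submodule k (MvPolynomial (Fin n) k) :=
    I.restrictScalars k ⊔ restrictSupport k (τ.leadSet I)ᶜ with hV
  suffices h : monomial m (1 : k) ∈ V by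
    obtain ⟨f, hf, r, hr, hfr⟩ := Submodule.mem_sup.1 h
    refine ⟨r, ?_, fun α hα => ((mem_restrictSupport_iff k).1 hr) hα⟩
    rw [← hfr, add_sub_cancel_right]
    exact hf
  induction m using τ.wf.induction with
  | _ m ih =>
    by_cases hm : m ∈ τ.leadSet I
    · obtain ⟨f, hf, hlead⟩ := hm
      have hc : f.coeff m ≠ 0 := mem_support_iff.1 hlead.1
      have hfV : f ∈ V := Submodule.mem_sup_left hf
      have htail : ∑ β ∈ f.support.erase m, monomial β (f.coeff β) ∈ V := by
        refine Submodule.sum_mem _ fun β hβ => ?_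
        have h := ih β (hlead.2 β (Finset.mem_of_mem_erase hβ) (Finset.ne_of_mem_erase hβ))
        have := V.smul_mem (f.coeff β) h
        rwa [smul_monomial, smul_eq_mul, mul_one] at this
      have hsum : monomial m (f.coeff m) + ∑ β ∈ f.support.erase m, monomial β (f.coeff β) = f := by
        rw [Finset.add_sum_erase f.support (fun β => monomial β (f.coeff β)) hlead.1]
        exact f.support_sum_monomial_coeff
      have hmV : monomial m (f.coeff m) ∈ V := by
        rw [← eq_sub_iff_add_eq] at hsum
        rw [hsum]
        exact V.sub_mem hfV htail
      have := V.smul_mem (f.coeff m)⁻¹ hmV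
      rwa [smul_monomial, smul_eq_mul, inv_mul_cancel₀ hc] at this
    · refine Submodule.mem_sup_right ((mem_restrictSupport_iff k).2 fun α hα => ?_)
      have : α = m := by simpa using support_monomial_subset hα
      exact this ▸ hm

/-- For every leading exponent `m` of `I`, `g m` is `x^m` minus its normal form, i.e. the element
of `I` with coefficient `1` at `m` and no other exponent in the leading set. These polynomials
form a `k`-basis of `I` containing the reduced Gröbner basis. Values of `g` outside the leading
set are arbitrary. -/
def TermOrder.IsReducedFamily (τ : TermOrder n) (I : Ideal (MvPolynomial (Fin n) k))
    (g : (Fin n →₀ ℕ) → MvPolynomial (Fin n) k) : Prop :=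
  ∀ m ∈ τ.leadSet I, g m ∈ I ∧ (g m).coeff m = 1 ∧
    ∀ α ∈ (g m).support, α ∈ τ.leadSet I → α = m

theorem TermOrder.exists_isReducedFamily (τ : TermOrder n)
    (I : Ideal (MvPolynomial (Fin n) k)) : ∃ g, τ.IsReducedFamily I g := by
  choose r hr hsupp using τ.exists_normalForm I
  refine ⟨fun m => monomial m 1 - r m, fun m hm => ⟨hr m, ?_, fun α hα hαE => ?_⟩⟩
  · have : (r m).coeff m = 0 := by
      by_contra h
      exact hsupp m m (mem_support_iff.2 h) hm
    simp [coeff_sub, this]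
  · by_contra hne
    have h0 : (r m).coeff α = 0 := by
      by_contra h
      exact hsupp m α (mem_support_iff.2 h) hαE
    rw [mem_support_iff, coeff_sub, h0, coeff_monomial, if_neg (Ne.symm hne)] at hα
    simp at hα

/-- An element `f` of `I` equals `∑ f_m g_m` over its exponents `m` that are leading exponents
of `I`, since the difference lies in `I` and has only standard monomials. So each standard
monomial of `f` comes from some `g m`. -/
theorem TermOrder.IsReducedFamily.exists_of_mem_support {τ : TermOrder n}
    {I : Ideal (MvPolynomial (Fin n) k)} {g : (Fin n →₀ ℕ) → MvPolynomial (Fin n) k}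
    (hg : τ.IsReducedFamily I g) {f : MvPolynomial (Fin n) k} (hf : f ∈ I)
    {α : Fin n →₀ ℕ} (hα : α ∈ f.support) (hαE : α ∉ τ.leadSet I) :
    ∃ m ∈ f.support, m ∈ τ.leadSet I ∧ α ∈ (g m).support := by
  classical
  set s := f.support.filter (· ∈ τ.leadSet I) with hs
  set h := f - ∑ m ∈ s, C (f.coeff m) * g m with hh
  have hhI : h ∈ I := I.sub_mem hf <| I.sum_mem fun m hm =>
    I.mul_mem_left _ (hg m (Finset.mem_filter.1 hm).2).1
  have hh0 : h = 0 := by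
    by_contra hne
    obtain ⟨β, hβ⟩ := τ.exists_isLead h hne
    have hβE : β ∈ τ.leadSet I := ⟨h, hhI, hβ⟩
    refine mem_support_iff.1 hβ.1 ?_
    have hz : ∀ m ∈ s, m ≠ β → (C (f.coeff m) * g m).coeff β = 0 := by
      intro m hm hmβ
      rw [coeff_C_mul]
      by_contra hc
      exact hmβ ((hg m (Finset.mem_filter.1 hm).2).2.2 β
        (mem_support_iff.2 (right_ne_zero_of_mul hc)) hβE).symm
    rw [hh, coeff_sub, coeff_sum]
    by_cases hβs : β ∈ s
    · rw [Finset.sum_eq_single_of_mem β hβs hz, coeff_C_mul, (hg β hβE).2.1, mul_one, sub_self]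
    · rw [Finset.sum_eq_zero fun m hm => hz m hm fun h => hβs (h ▸ hm)]
      have : β ∉ f.support := fun h => hβs (Finset.mem_filter.2 ⟨h, hβE⟩)
      simpa using this
  have hfs : f.coeff α = ∑ m ∈ s, (C (f.coeff m) * g m).coeff α := by
    rw [← coeff_sum, ← sub_eq_zero, ← coeff_sub, ← hh, hh0, coeff_zero]
  obtain ⟨m, hm, hmα⟩ := Finset.exists_ne_zero_of_sum_ne_zero
    (hfs ▸ mem_support_iff.1 hα)
  rw [coeff_C_mul] at hmα
  exact ⟨m, (Finset.mem_filter.1 hm).1, (Finset.mem_filter.1 hm).2,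
    mem_support_iff.2 (right_ne_zero_of_mul hmα)⟩

/-! ### Initial forms -/

theorem mem_support_initialForm {ω : Fin n → ℝ} {f : MvPolynomial (Fin n) k}
    {α : Fin n →₀ ℕ} : α ∈ (initialForm ω f).support ↔
      α ∈ f.support ∧ ∀ β ∈ f.support, wdeg ω β ≤ wdeg ω α := by
  classical
  rw [mem_support_iff, initialForm, coeff_sum]
  simp only [coeff_monomial]
  rw [Finset.sum_ite_eq']
  simp only [Finset.mem_filter, mem_support_iff]
  split_ifs with h
  · exact ⟨fun _ => h, fun _ => h.1⟩
  · exact ⟨fun h' => absurd rfl h', fun h' => absurd h' h⟩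

theorem coeff_initialForm {ω : Fin n → ℝ} {f : MvPolynomial (Fin n) k}
    {α : Fin n →₀ ℕ} (h : ∀ β ∈ f.support, wdeg ω β ≤ wdeg ω α) :
    (initialForm ω f).coeff α = f.coeff α := by
  classical
  rw [initialForm, coeff_sum]
  simp only [coeff_monomial]
  rw [Finset.sum_ite_eq']
  simp only [Finset.mem_filter, mem_support_iff]
  split_ifs with h'
  · rfl
  · by_contra hne
    exact h' ⟨Ne.symm hne, fun β hβ => h β (mem_support_iff.2 hβ)⟩

/-- Each graded piece of an element of the initial ideal is the top graded piece of an element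
of `I`, or zero. -/
theorem exists_of_mem_initialFormIdeal (ω : Fin n → ℝ) (I : Ideal (MvPolynomial (Fin n) k))
    {h : MvPolynomial (Fin n) k} (hh : h ∈ initialFormIdeal ω I) :
    ∀ W : ℝ, ∃ f ∈ I, (∀ α ∈ f.support, wdeg ω α ≤ W) ∧
      ∀ α, wdeg ω α = W → f.coeff α = h.coeff α := by
  have hadd : ∀ x y : MvPolynomial (Fin n) k,
      (∀ W : ℝ, ∃ f ∈ I, (∀ α ∈ f.support, wdeg ω α ≤ W) ∧
        ∀ α, wdeg ω α = W → f.coeff α = x.coeff α) →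
      (∀ W : ℝ, ∃ f ∈ I, (∀ α ∈ f.support, wdeg ω α ≤ W) ∧
        ∀ α, wdeg ω α = W → f.coeff α = y.coeff α) →
      ∀ W : ℝ, ∃ f ∈ I, (∀ α ∈ f.support, wdeg ω α ≤ W) ∧
        ∀ α, wdeg ω α = W → f.coeff α = (x + y).coeff α := by
    classical
    intro x y hx hy W
    obtain ⟨f, hf, hfW, hfx⟩ := hx W
    obtain ⟨f', hf', hfW', hfy⟩ := hy W
    refine ⟨f + f', I.add_mem hf hf', fun α hα => ?_, fun α hα => ?_⟩
    · rcases Finset.mem_union.1 (support_add hα) with h | h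
      · exact hfW α h
      · exact hfW' α h
    · rw [coeff_add, coeff_add, hfx α hα, hfy α hα]
  refine Submodule.span_induction (p := fun h _ => ∀ W : ℝ, ∃ f ∈ I,
    (∀ α ∈ f.support, wdeg ω α ≤ W) ∧ ∀ α, wdeg ω α = W → f.coeff α = h.coeff α)
    ?_ ?_ (fun x y _ _ hx hy => hadd x y hx hy) ?_ hh
  · rintro _ ⟨f, hf, rfl⟩ W
    by_cases hex : ∃ α ∈ (initialForm ω f).support, wdeg ω α = W
    · obtain ⟨α, hα, rfl⟩ := hex
      have hmax := (mem_support_initialForm.1 hα).2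
      exact ⟨f, hf, hmax, fun β hβ => (coeff_initialForm (hβ.symm ▸ hmax)).symm⟩
    · refine ⟨0, I.zero_mem, by simp, fun α hα => ?_⟩
      by_contra hne
      exact hex ⟨α, mem_support_iff.2 (Ne.symm (by simpa using hne)), hα⟩
  · exact fun W => ⟨0, I.zero_mem, by simp, by simp⟩
  · intro r x _ hx
    rw [smul_eq_mul]
    induction r using MvPolynomial.induction_on' with
    | monomial γ c =>
      classical
      intro W
      obtain ⟨f, hf, hfW, hfx⟩ := hx (W - wdeg ω γ)
      refine ⟨monomial γ c * f, I.mul_mem_left _ hf, fun α hα => ?_, fun α hα => ?_⟩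
      · rw [mem_support_iff, coeff_monomial_mul'] at hα
        split_ifs at hα with hle
        · have h1 := hfW _ (mem_support_iff.2 (right_ne_zero_of_mul hα))
          have h2 := wdeg_add ω (α - γ) γ
          rw [tsub_add_cancel_of_le hle] at h2
          linarith
        · exact absurd rfl hα
      · rw [coeff_monomial_mul', coeff_monomial_mul']
        split_ifs with hle
        · have h2 := wdeg_add ω (α - γ) γ
          rw [tsub_add_cancel_of_le hle] at h2
          rw [hfx (α - γ) (by linarith)]
        · rfl
    | add p q hp hq =>
      rw [add_mul]
      exact hadd _ _ hp hq

/-- For an order refining `ω`, leading exponents of `in_ω(I)` are leading exponents of `I`: the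
top graded piece of an element of `in_ω(I)` is also that of an element of `I`. -/
theorem TermOrder.refine_lead_mem (τ : TermOrder n) (ω : Fin n → ℝ) (hω : ∀ i, 0 ≤ ω i)
    (I : Ideal (MvPolynomial (Fin n) k)) {h : MvPolynomial (Fin n) k}
    (hh : h ∈ initialFormIdeal ω I) {α : Fin n →₀ ℕ} (hα : (τ.refine ω hω).IsLead h α) :
    α ∈ (τ.refine ω hω).leadSet I := by
  obtain ⟨f, hf, hfW, hfh⟩ := exists_of_mem_initialFormIdeal ω I hh (wdeg ω α)
  refine ⟨f, hf, ?_, fun β hβ hne => ?_⟩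
  · rw [mem_support_iff, hfh α rfl]
    exact mem_support_iff.1 hα.1
  · rcases (hfW β hβ).lt_or_eq with h1 | h1
    · exact Or.inl h1
    · refine hα.2 β ?_ hne
      rw [mem_support_iff, ← hfh β h1]
      exact mem_support_iff.1 hβ

/-! ### Geometry of the cones -/

/-- A vector `u` in the closure of the class of `ω` gives each `g m` its maximal weight at `m`.
If `in_u(I) = in_ω(I)`, then the leading exponent of `in_u(g m)` is a leading exponent of `I`, and
the only one of these in `g m` is `m`; the inequality passes to the closure. -/
theorem wdeg_le_of_mem_Cv (τ : TermOrder n) (ω : Fin n → ℝ) (hω : ∀ i, 0 ≤ ω i)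
    (I : Ideal (MvPolynomial (Fin n) k)) {g : (Fin n →₀ ℕ) → MvPolynomial (Fin n) k}
    (hg : (τ.refine ω hω).IsReducedFamily I g) {u : Fin n → ℝ} (hu : u ∈ Cv I ω)
    {m : Fin n →₀ ℕ} (hm : m ∈ (τ.refine ω hω).leadSet I) {β : Fin n →₀ ℕ}
    (hβ : β ∈ (g m).support) : wdeg u β ≤ wdeg u m := by
  have hcont : ∀ α : Fin n →₀ ℕ, Continuous fun u : Fin n → ℝ => wdeg u α := by
    intro α
    unfold wdeg
    fun_prop
  have hclosed : IsClosed {u : Fin n → ℝ | wdeg u β ≤ wdeg u m} :=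
    isClosed_le (hcont β) (hcont m)
  refine closure_minimal (fun u hu => ?_) hclosed hu
  have hmem : initialForm u (g m) ∈ initialFormIdeal ω I := by
    rw [← show initialFormIdeal u I = initialFormIdeal ω I from hu]
    exact Ideal.subset_span ⟨g m, (hg m hm).1, rfl⟩
  have hne : initialForm u (g m) ≠ 0 := by
    obtain ⟨α, hα, hmax⟩ := Finset.exists_max_image (g m).support (wdeg u) ⟨β, hβ⟩
    intro h0
    have := mem_support_initialForm.2 ⟨hα, hmax⟩
    simp [h0] at this
  obtain ⟨α, hα⟩ := (τ.refine ω hω).exists_isLead _ hne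
  have hαs := mem_support_initialForm.1 hα.1
  have hαm : α = m := (hg m hm).2.2 α hαs.1 (τ.refine_lead_mem ω hω I hmem hα)
  exact hαm ▸ hαs.2 β hβ

/-- A linear functional that is nonnegative on `C` and has a nonzero coefficient is positive
on the interior of `C`. -/
theorem sum_pos_of_mem_interior {C : Set (Fin n → ℝ)} {w d : Fin n → ℝ} (hw : w ∈ interior C)
    (hd : d ≠ 0) (hC : ∀ x ∈ C, 0 ≤ ∑ i, x i * d i) : 0 < ∑ i, w i * d i := by
  have hlim : Filter.Tendsto (fun ε : ℝ => w - ε • d) (nhdsWithin 0 (Set.Ioi 0)) (nhds w) := by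
    have : Filter.Tendsto (fun ε : ℝ => w - ε • d) (nhds 0) (nhds (w - (0 : ℝ) • d)) :=
      Continuous.tendsto (by fun_prop) 0
    rw [zero_smul, sub_zero] at this
    exact this.mono_left nhdsWithin_le_nhds
  obtain ⟨ε, hεC, hε⟩ :=
    ((hlim.eventually (mem_interior_iff_mem_nhds.1 hw)).and self_mem_nhdsWithin).exists
  have h1 := hC _ hεC
  have h2 : 0 < ∑ i, d i * d i := by
    obtain ⟨i, hi⟩ := Function.ne_iff.1 hd
    exact Finset.sum_pos' (fun i _ => mul_self_nonneg _)
      ⟨i, Finset.mem_univ _, mul_self_pos.2 (by simpa using hi)⟩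
  have h3 : ∑ i, (w - ε • d) i * d i = ∑ i, w i * d i - ε * ∑ i, d i * d i := by
    rw [Finset.mul_sum, ← Finset.sum_sub_distrib]
    exact Finset.sum_congr rfl fun i _ => by simp; ring
  have h4 : 0 < ε * ∑ i, d i * d i := mul_pos hε h2
  linarith

/-- A linear functional that is nonnegative on `F` and zero at a relative interior point
vanishes on `F`. -/
theorem eq_zero_of_mem_intrinsicInterior {F : Set (Fin n → ℝ)} {v : Fin n → ℝ}
    (hv : v ∈ intrinsicInterior ℝ F) (l : (Fin n → ℝ) →ₗ[ℝ] ℝ) (hl : ∀ x ∈ F, 0 ≤ l x)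
    (hlv : l v = 0) : ∀ x ∈ F, l x = 0 := by
  intro y hy
  obtain ⟨z, hz, rfl⟩ := mem_intrinsicInterior.1 hv
  have hmem : ∀ ε : ℝ, AffineMap.lineMap (z : Fin n → ℝ) y ε ∈ affineSpan ℝ F := fun ε =>
    AffineMap.lineMap_mem ε z.2 (subset_affineSpan ℝ F hy)
  let c : ℝ → affineSpan ℝ F := fun ε => ⟨AffineMap.lineMap (z : Fin n → ℝ) y ε, hmem ε⟩
  have hc : Continuous c := Continuous.subtype_mk AffineMap.lineMap_continuous _
  have hc0 : c 0 = z := Subtype.ext (by simp [c])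
  have hlim : Filter.Tendsto c (nhdsWithin 0 (Set.Iio 0)) (nhds z) := by
    have := hc.tendsto 0
    rw [hc0] at this
    exact this.mono_left nhdsWithin_le_nhds
  -- moving from `v` slightly away from `y` stays in `F`
  obtain ⟨ε, hεF, hε⟩ :=
    ((hlim.eventually (mem_interior_iff_mem_nhds.1 hz)).and self_mem_nhdsWithin).exists
  have h1 : 0 ≤ l (c ε) := hl _ hεF
  have h2 : l (c ε) = ε * l y := by
    simp only [c, AffineMap.lineMap_apply, vsub_eq_sub, vadd_eq_add, map_add, map_smul, map_sub,
      hlv, smul_eq_mul, sub_zero, add_zero]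
  have h3 := hl y hy
  have hε' : ε < 0 := hε
  nlinarith

/-- If `F` spans a hyperplane, a functional vanishing on `F` is proportional to any functional
`φ ≠ 0` vanishing on `F`. -/
theorem smul_eq_of_facet {F : Set (Fin n → ℝ)}
    (hF : Module.finrank ℝ (vectorSpan ℝ F) = n - 1) (φ l : (Fin n → ℝ) →ₗ[ℝ] ℝ)
    (hφ : ∀ x ∈ F, φ x = 0) (hl : ∀ x ∈ F, l x = 0) {w : Fin n → ℝ} (hw : φ w ≠ 0)
    (x : Fin n → ℝ) : l x = l w / φ w * φ x := by
  have hker : ∀ ψ : (Fin n → ℝ) →ₗ[ℝ] ℝ, (∀ x ∈ F, ψ x = 0) → vectorSpan ℝ F ≤ ψ.ker := by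
    intro ψ hψ
    refine Submodule.span_le.2 ?_
    rintro _ ⟨a, ha, b, hb, rfl⟩
    simp [hψ a ha, hψ b hb]
  have hrange : Module.finrank ℝ φ.range = 1 := by
    rw [LinearMap.range_eq_top.2 (LinearMap.surjective fun h => hw (by simp [h]))]
    simp
  have hrn := φ.finrank_range_add_finrank_ker
  rw [hrange, Module.finrank_fin_fun] at hrn
  have heq : vectorSpan ℝ F = φ.ker :=
    Submodule.eq_of_le_of_finrank_eq (hker φ hφ) (by omega)
  have hx : x - (φ x / φ w) • w ∈ l.ker := hker l hl (by
    rw [heq, LinearMap.mem_ker, map_sub, map_smul, smul_eq_mul, div_mul_cancel₀ _ hw, sub_self])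
  rw [LinearMap.mem_ker, map_sub, map_smul, smul_eq_mul, sub_eq_zero] at hx
  rw [hx]
  ring

/-- The linear functional `x ↦ ⟨x, d⟩`. -/
noncomputable def dotFunctional (d : Fin n → ℝ) : (Fin n → ℝ) →ₗ[ℝ] ℝ where
  toFun x := ∑ i, x i * d i
  map_add' x y := by simp [add_mul, Finset.sum_add_distrib]
  map_smul' c x := by simp [Finset.mul_sum, mul_assoc]

theorem dotFunctional_single (d : Fin n → ℝ) (i : Fin n) :
    dotFunctional d (Pi.single i 1) = d i := by
  simp [dotFunctional, Pi.single_apply]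

theorem dotFunctional_sub (a b : Fin n →₀ ℕ) (x : Fin n → ℝ) :
    dotFunctional (fun i => (a i : ℝ) - (b i : ℝ)) x = wdeg x a - wdeg x b := by
  simp [dotFunctional, wdeg, mul_sub]

/-- A term order with `p ≺ q` puts `β` below `m` whenever `m - β` is a positive real multiple of
`q - p`. The multiple is automatically rational, so clearing denominators gives
`a m + b p = a β + b q` with positive integers `a`, `b`. -/
theorem TermOrder.lt_of_sub_eq_mul (τ : TermOrder n) {p q m β : Fin n →₀ ℕ} (hpq : τ.lt p q)
    {t : ℝ} (ht : 0 < t) (h : ∀ i, (m i : ℝ) - β i = t * ((q i : ℝ) - p i)) : τ.lt β m := by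
  have hne : p ≠ q := fun h => τ.irrefl p (by rw [← h] at hpq; exact hpq)
  obtain ⟨i, hi⟩ : ∃ i, p i ≠ q i := by
    by_contra hall
    push Not at hall
    exact hne (Finsupp.ext hall)
  have hi' : (q i : ℝ) - p i ≠ 0 := by
    rw [sub_ne_zero]
    exact_mod_cast hi.symm
  obtain ⟨a, ha⟩ : ∃ a : ℕ, (a : ℝ) = |(q i : ℝ) - p i| :=
    ⟨((q i : ℤ) - p i).natAbs, by rw [Nat.cast_natAbs]; push_cast; rfl⟩
  obtain ⟨b, hb⟩ : ∃ b : ℕ, (b : ℝ) = |(m i : ℝ) - β i| :=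
    ⟨((m i : ℤ) - β i).natAbs, by rw [Nat.cast_natAbs]; push_cast; rfl⟩
  have ha0 : (0 : ℝ) < a := ha ▸ abs_pos.2 hi'
  have hab : (b : ℝ) = a * t := by rw [hb, h i, abs_mul, abs_of_pos ht, ha, mul_comm]
  have hb0 : (0 : ℝ) < b := hab ▸ mul_pos ha0 ht
  have hrel : a • m + b • p = a • β + b • q := by
    ext j
    have : (a : ℝ) * m j + b * p j = a * β j + b * q j := by
      rw [hab]
      linear_combination (a : ℝ) * h j
    simp only [Finsupp.add_apply, Finsupp.smul_apply, smul_eq_mul]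
    exact_mod_cast this
  obtain ⟨a, rfl⟩ : ∃ a', a = a' + 1 :=
    ⟨a - 1, by have : 0 < a := by exact_mod_cast ha0
               omega⟩
  obtain ⟨b, rfl⟩ : ∃ b', b = b' + 1 :=
    ⟨b - 1, by have : 0 < b := by exact_mod_cast hb0
               omega⟩
  have hmβ : m ≠ β := by
    rintro rfl
    have := h i
    rw [sub_self] at this
    exact (mul_ne_zero ht.ne' hi') this.symm
  refine (τ.total m β hmβ).resolve_left fun hlt => ?_
  have := τ.add_lt_add (τ.nsmul_lt hlt a) (τ.nsmul_lt hpq b)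
  rw [hrel] at this
  exact τ.irrefl _ this

/-! ### The two initial ideals -/

/-- A weight that strictly prefers `m` in every `g m` has the same initial ideal as the term
order. -/
theorem initialFormIdeal_eq_span {τ : TermOrder n} {I : Ideal (MvPolynomial (Fin n) k)}
    {g : (Fin n →₀ ℕ) → MvPolynomial (Fin n) k} (hg : τ.IsReducedFamily I g) {w : Fin n → ℝ}
    (hw : ∀ m ∈ τ.leadSet I, ∀ β ∈ (g m).support, β ≠ m → wdeg w β < wdeg w m) :
    initialFormIdeal w I = Ideal.span ((fun α => monomial α (1 : k)) '' τ.leadSet I) := by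
  apply le_antisymm
  · refine Ideal.span_le.2 ?_
    rintro _ ⟨f, hf, rfl⟩
    rw [SetLike.mem_coe, mem_ideal_span_monomial_image]
    intro α hα
    rw [mem_support_initialForm] at hα
    refine ⟨α, ?_, le_rfl⟩
    by_contra hαE
    obtain ⟨m, hm, hmE, hαm⟩ := hg.exists_of_mem_support hf hα.1 hαE
    exact absurd (hα.2 m hm) (not_le.2 (hw m hmE α hαm fun h => hαE (h ▸ hmE)))
  · refine Ideal.span_le.2 ?_
    rintro _ ⟨m, hm, rfl⟩
    refine Ideal.subset_span ⟨g m, (hg m hm).1, ?_⟩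
    have hmax : ∀ β ∈ (g m).support, wdeg w β ≤ wdeg w m := fun β hβ => by
      by_cases h : β = m
      · rw [h]
      · exact (hw m hm β hβ h).le
    ext α
    rw [coeff_monomial]
    split_ifs with h
    · rw [← h, coeff_initialForm hmax, (hg m hm).2.1]
    · by_contra hne
      have hα := mem_support_initialForm.1 (mem_support_iff.2 (Ne.symm hne))
      have hms : m ∈ (g m).support := by simp [mem_support_iff, (hg m hm).2.1]
      exact absurd (hα.2 m hms) (not_le.2 (hw m hm α hα.1 (Ne.symm h)))

/-- If `v` weakly prefers `m` in every `g m`, then no nonzero element of `in_v(I)` is supported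
on standard monomials. -/
theorem eq_zero_of_mem_initialFormIdeal {σ : TermOrder n} {I : Ideal (MvPolynomial (Fin n) k)}
    {g : (Fin n →₀ ℕ) → MvPolynomial (Fin n) k} (hg : σ.IsReducedFamily I g) {v : Fin n → ℝ}
    (hv : ∀ m ∈ σ.leadSet I, ∀ β ∈ (g m).support, wdeg v β ≤ wdeg v m)
    {h : MvPolynomial (Fin n) k} (hh : h ∈ initialFormIdeal v I)
    (hstd : ∀ α ∈ h.support, α ∉ σ.leadSet I) : h = 0 := by
  by_contra hne
  obtain ⟨α, hα⟩ := support_nonempty.2 hne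
  obtain ⟨f, hf, hfW, hfh⟩ := exists_of_mem_initialFormIdeal v I hh (wdeg v α)
  have hαf : α ∈ f.support := by
    rw [mem_support_iff, hfh α rfl]
    exact mem_support_iff.1 hα
  obtain ⟨m, hm, hmE, hαm⟩ := hg.exists_of_mem_support hf hαf (hstd α hα)
  have hmW : wdeg v m = wdeg v α := le_antisymm (hfW m hm) (hv m hmE α hαm)
  refine hstd m ?_ hmE
  rw [mem_support_iff, ← hfh m hmW]
  exact mem_support_iff.1 hm

/-- If moreover `m` is the `τ`-leading exponent of `in_v(g m)` for all `m`, then `in_v(I)` has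
for `τ` the same leading exponents as `I` for `σ`. The inclusion `⊇` is clear; it is an
equality because the standard monomials of both sides are bases modulo `in_v(I)`. -/
theorem leadSet_initialFormIdeal_eq (τ : TermOrder n) {σ : TermOrder n}
    {I : Ideal (MvPolynomial (Fin n) k)}
    {g : (Fin n →₀ ℕ) → MvPolynomial (Fin n) k} (hg : σ.IsReducedFamily I g) {v : Fin n → ℝ}
    (hv : ∀ m ∈ σ.leadSet I, ∀ β ∈ (g m).support, wdeg v β ≤ wdeg v m)
    (hτ : ∀ m ∈ σ.leadSet I, ∀ β ∈ (g m).support, β ≠ m → wdeg v β = wdeg v m → τ.lt β m) :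
    τ.leadSet (initialFormIdeal v I) = σ.leadSet I := by
  have hsup : σ.leadSet I ⊆ τ.leadSet (initialFormIdeal v I) := by
    intro m hm
    have hms : m ∈ (g m).support := by simp [mem_support_iff, (hg m hm).2.1]
    refine ⟨initialForm v (g m), Ideal.subset_span ⟨g m, (hg m hm).1, rfl⟩,
      mem_support_initialForm.2 ⟨hms, hv m hm⟩, fun β hβ hne => ?_⟩
    rw [mem_support_initialForm] at hβ
    exact hτ m hm β hβ.1 hne (le_antisymm (hv m hm β hβ.1) (hβ.2 m hms))
  refine Set.Subset.antisymm (fun α hα => ?_) hsup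
  by_contra hαE
  obtain ⟨r, hr, hrs⟩ := τ.exists_normalForm (initialFormIdeal v I) α
  have h0 := eq_zero_of_mem_initialFormIdeal hg hv hr fun β hβ hβE => by
    by_cases hβα : β = α
    · exact hαE (hβα ▸ hβE)
    · refine hrs β ?_ (hsup hβE)
      rw [mem_support_iff, coeff_sub, coeff_monomial, if_neg (Ne.symm hβα), zero_sub] at hβ
      exact mem_support_iff.2 (neg_ne_zero.1 hβ)
  refine hrs α ?_ hα
  rw [← sub_eq_zero.1 h0]
  simp [mem_support_iff]

/-! ### The target of an edge -/

/-- Let `(C₁, C₂)` be a directed edge of the graph of the Gröbner fan oriented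
by `≺`, with shared facet `F = C₁ ∩ C₂`, and let `v` lie in the relative
interior of `F`.  Then `in_≺(in_v(I)) = M₂`, the monomial initial ideal of
`C₂` (i.e. `in_{w₂}(I)` for any `w₂` interior to `C₂`). -/
theorem initialIdeal_of_edgeIdeal_eq_target (τ : TermOrder n)
    (I : Ideal (MvPolynomial (Fin n) k))
    (C₁ C₂ : Set (Fin n → ℝ))
    (h₁ : C₁ ∈ GroebnerFan I) (h₂ : C₂ ∈ GroebnerFan I)
    (hint₁ : (interior C₁).Nonempty) (hint₂ : (interior C₂).Nonempty)
    (hne : C₁ ≠ C₂)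
    (hfacet : Module.finrank ℝ ↥(vectorSpan ℝ (C₁ ∩ C₂)) = n - 1)
    (p q : Fin n →₀ ℕ) (hpq : τ.lt p q)
    (horth : ∀ x ∈ C₁ ∩ C₂, ∑ i, x i * ((q i : ℝ) - (p i : ℝ)) = 0)
    (hneg : ∀ x ∈ C₁ \ C₂, ∑ i, x i * ((q i : ℝ) - (p i : ℝ)) < 0)
    (hpos : ∀ x ∈ C₂ \ C₁, 0 < ∑ i, x i * ((q i : ℝ) - (p i : ℝ)))
    (v : Fin n → ℝ) (hv : v ∈ intrinsicInterior ℝ (C₁ ∩ C₂))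
    (w₂ : Fin n → ℝ) (hw₂ : w₂ ∈ interior C₂) :
    τ.initialIdeal (initialFormIdeal v I) = initialFormIdeal w₂ I := by
  obtain ⟨-, ω, hω, hface⟩ := h₂
  have hω' : ∀ i, 0 ≤ ω i := fun i => (hω i).le
  have hsub : C₂ ⊆ Cv I ω := by
    rcases hface with h | ⟨w, h⟩
    · rw [h]; exact Set.empty_subset _
    · rw [h]; exact Set.sep_subset _ _
  set σ := τ.refine ω hω' with hσ
  obtain ⟨g, hg⟩ := σ.exists_isReducedFamily I
  have hle : ∀ u ∈ C₂, ∀ m ∈ σ.leadSet I, ∀ β ∈ (g m).support, wdeg u β ≤ wdeg u m :=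
    fun u hu m hm β hβ => wdeg_le_of_mem_Cv τ ω hω' I hg (hsub hu) hm hβ
  have hdne : ∀ a b : Fin n →₀ ℕ, a ≠ b → (fun i => (a i : ℝ) - (b i : ℝ)) ≠ 0 := by
    intro a b hab h
    refine hab (Finsupp.ext fun i => ?_)
    have := congrFun h i
    simp only [Pi.zero_apply, sub_eq_zero] at this
    exact_mod_cast this
  have hlt : ∀ m ∈ σ.leadSet I, ∀ β ∈ (g m).support, β ≠ m → wdeg w₂ β < wdeg w₂ m := by
    intro m hm β hβ hne'
    have h : 0 < dotFunctional (fun i => (m i : ℝ) - (β i : ℝ)) w₂ :=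
      sum_pos_of_mem_interior hw₂ (hdne m β (Ne.symm hne')) fun x hx =>
        (sub_nonneg.2 (hle x hx m hm β hβ)).trans_eq (dotFunctional_sub m β x).symm
    rw [dotFunctional_sub] at h
    exact sub_pos.1 h
  have hqp : q ≠ p := fun h => τ.irrefl p (by rw [h] at hpq; exact hpq)
  have hw₂pos : 0 < dotFunctional (fun i => (q i : ℝ) - (p i : ℝ)) w₂ := by
    refine sum_pos_of_mem_interior hw₂ (hdne q p hqp) fun x hx => ?_
    by_cases hx₁ : x ∈ C₁
    · exact (horth x ⟨hx₁, hx⟩).ge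
    · exact (hpos x ⟨hx, hx₁⟩).le
  have hvF : v ∈ C₁ ∩ C₂ := intrinsicInterior_subset hv
  have hlead : ∀ m ∈ σ.leadSet I, ∀ β ∈ (g m).support, β ≠ m → wdeg v β = wdeg v m →
      τ.lt β m := by
    intro m hm β hβ hne' heq
    -- `⟨·, m - β⟩` is nonnegative on the facet and zero at `v`, so it vanishes on the facet; hence
    -- `m - β` is a multiple of `q - p`, and `w₂` shows that the multiple is positive
    set l := dotFunctional fun i => (m i : ℝ) - (β i : ℝ) with hl
    have hl0 : ∀ x ∈ C₁ ∩ C₂, l x = 0 := by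
      refine eq_zero_of_mem_intrinsicInterior hv l (fun x hx => ?_) ?_
      · rw [hl, dotFunctional_sub]
        exact sub_nonneg.2 (hle x hx.2 m hm β hβ)
      · rw [hl, dotFunctional_sub, heq, sub_self]
    have hprop := smul_eq_of_facet hfacet (dotFunctional fun i => (q i : ℝ) - (p i : ℝ)) l
      horth hl0 hw₂pos.ne'
    refine τ.lt_of_sub_eq_mul hpq (div_pos (a := l w₂) ?_ hw₂pos) fun i => ?_
    · rw [hl, dotFunctional_sub]
      exact sub_pos.2 (hlt m hm β hβ hne')
    · have := hprop (Pi.single i 1)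
      rwa [hl, dotFunctional_single, dotFunctional_single] at this
  rw [initialFormIdeal_eq_span hg hlt, τ.initialIdeal_eq_span,
    leadSet_initialFormIdeal_eq τ hg (hle v hvF.2) hlead]
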